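/- Let A, B ∈ ℂ^{m×n}. The ⊤-Stein matrix equation X = A Xᵀ B + C has a unique solution X ∈ ℂ^{m×n} for every C ∈ ℂ^{m×n} if and only if the following two conditions hold: (i) for every eigenvalue λ of AᵀB with λ ≠ −1, the number 1/λ is not an eigenvalue of AᵀB (in particular 1 ∉ σ(AᵀB) since 1 = 1/1), and (ii) if −1 is an eigenvalue of AᵀB, then −1 is a simple eigenvalue (algebraic multiplicity one). -/

import Mathlib

open Matrix Polynomial

/-- An endomorphism with an eigenvalue of algebraic multiplicity at least two has either two
independent eigenvectors or a Jordan chain of length two for it. -/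
theorem Module.End.exists_pair_of_one_lt_finrank_maxGenEigenspace {K V : Type*} [Field K]
    [AddCommGroup V] [Module K V] [FiniteDimensional K V] (f : Module.End K V) (μ : K)
    (h : 1 < Module.finrank K (f.maxGenEigenspace μ)) :
    ∃ u v : V, ∃ c : K, LinearIndependent K ![u, v] ∧ f u = μ • u ∧ f v = μ • v + c • u := by
  by_cases hN : ∃ v, (f - μ • 1) v ≠ 0 ∧ (f - μ • 1) ((f - μ • 1) v) = 0
  · obtain ⟨v, hv, hvv⟩ := hN
    refine ⟨(f - μ • 1) v, v, 1, ?_, ?_, ?_⟩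
    · rw [LinearIndependent.pair_iff]
      intro s t hst
      have ht : t = 0 := by
        have := congrArg (f - μ • 1 : Module.End K V) hst
        rw [map_add, map_smul, map_smul, hvv, smul_zero, zero_add, map_zero] at this
        exact (smul_eq_zero.mp this).resolve_right hv
      subst ht
      rw [zero_smul, add_zero] at hst
      exact ⟨(smul_eq_zero.mp hst).resolve_right hv, rfl⟩
    · rw [LinearMap.sub_apply] at hvv
      exact sub_eq_zero.mp hvv
    · simp
  · push Not at hN
    have hker : ∀ k : ℕ, ∀ x, ((f - μ • 1) ^ k) x = 0 → (f - μ • 1) x = 0 := by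
      intro k
      induction k with
      | zero => intro x hx; simp_all
      | succ k ih =>
        intro x hx
        rw [pow_succ, Module.End.mul_apply] at hx
        by_contra hne
        exact hN x hne (ih _ hx)
    have heig : ∀ x : f.maxGenEigenspace μ, f x = μ • (x : V) := by
      intro x
      obtain ⟨k, hk⟩ := (f.mem_maxGenEigenspace μ x).mp x.2
      have := hker k x hk
      rw [LinearMap.sub_apply] at this
      exact sub_eq_zero.mp this
    obtain ⟨b, hb⟩ := exists_linearIndependent_of_le_finrank (R := K) (Nat.succ_le_of_lt h)
    refine ⟨b 0, b 1, 0, ?_, heig _, by rw [heig, zero_smul, add_zero]⟩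
    have hpair : ![(b 0 : V), (b 1 : V)] = (f.maxGenEigenspace μ).subtype ∘ b := by
      funext i
      fin_cases i <;> rfl
    rw [hpair]
    exact hb.map' (f.maxGenEigenspace μ).subtype (Submodule.ker_subtype _)

namespace Matrix

variable {K : Type*} [Field K] {m n : Type*} [Fintype m] [Fintype n]

/-- The homogeneous ⊤-Stein equation reduces to the square equation `Y = Yᵀ(AᵀB)`. -/
theorem tStein_homogeneous_trivial_iff (A B : Matrix m n K) :
    (∀ X : Matrix m n K, X = A * Xᵀ * B → X = 0) ↔
      ∀ Y : Matrix n n K, Y = Yᵀ * (Aᵀ * B) → Y = 0 := by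
  constructor
  · intro h Y hY
    have hX : A * Y = 0 := h (A * Y) <| by
      rw [transpose_mul, Matrix.mul_assoc, Matrix.mul_assoc, ← hY]
    rw [hY, ← Matrix.mul_assoc, ← transpose_mul, hX, transpose_zero, Matrix.zero_mul]
  · intro h X hX
    have hY : Xᵀ * B = 0 := h (Xᵀ * B) <| by
      rw [← Matrix.mul_assoc, ← transpose_mul, ← Matrix.mul_assoc, ← hX]
    rw [hX, Matrix.mul_assoc, hY, Matrix.mul_zero]

/-- Unique solvability of the ⊤-Stein equation amounts to triviality of its homogeneous part. -/
theorem tStein_existsUnique_iff (A B : Matrix m n K) :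
    (∀ C : Matrix m n K, ∃! X : Matrix m n K, X = A * Xᵀ * B + C) ↔
      ∀ X : Matrix m n K, X = A * Xᵀ * B → X = 0 := by
  let T : Matrix m n K →ₗ[K] Matrix m n K :=
    { toFun := fun X => X - A * Xᵀ * B
      map_add' := fun X Y => by
        rw [transpose_add, Matrix.mul_add, Matrix.add_mul]; abel
      map_smul' := fun c X => by simp [smul_sub] }
  have hT : ∀ X C, X = A * Xᵀ * B + C ↔ T X = C := fun X C => by
    change _ ↔ X - A * Xᵀ * B = C
    rw [sub_eq_iff_eq_add']
  constructor
  · intro h X hX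
    exact (h 0).unique (by rwa [add_zero]) (by simp)
  · intro h C
    have hinj : Function.Injective T := by
      rw [injective_iff_map_eq_zero]
      intro X hX
      exact h X (by simpa using (hT X 0).mpr hX)
    obtain ⟨X, hX⟩ := LinearMap.injective_iff_surjective.mp hinj C
    exact ⟨X, (hT X C).mpr hX, fun Z hZ => hinj (((hT Z C).mp hZ).trans hX.symm)⟩

/-- A pair of independent generalized left eigenvectors for reciprocal eigenvalues yields a
nonzero solution of `Y = YᵀM`. -/
theorem exists_ne_zero_eq_transpose_mul_of_pair {M : Matrix n n K} {u v : n → K} {a b c d : K}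
    (huv : LinearIndependent K ![u, v]) (hu : u ᵥ* M = a • u) (hv : v ᵥ* M = b • v + c • u)
    (hab : a * b = 1) (hd : d = a * (c + d)) :
    ∃ Y : Matrix n n K, Y ≠ 0 ∧ Y = Yᵀ * M := by
  rw [LinearIndependent.pair_iff] at huv
  refine ⟨vecMulVec u v + a • vecMulVec v u + d • vecMulVec u u, ?_, ?_⟩
  · intro hY
    have hz : ∀ j, v j + d * u j = 0 := by
      intro j
      refine (huv (v j + d * u j) (a * u j) ?_).1
      ext i
      have := congrFun (congrFun hY i) j
      simp only [add_apply, smul_apply, vecMulVec_apply, zero_apply, smul_eq_mul] at this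
      simp only [Pi.add_apply, Pi.smul_apply, smul_eq_mul, Pi.zero_apply]
      linear_combination this
    refine one_ne_zero (huv d 1 ?_).2
    ext j
    simp only [Pi.add_apply, Pi.smul_apply, smul_eq_mul, Pi.zero_apply]
    linear_combination hz j
  · simp only [transpose_add, transpose_smul, transpose_vecMulVec, Matrix.add_mul,
      Matrix.smul_mul, vecMulVec_mul, hu, hv]
    ext i j
    simp only [add_apply, smul_apply, vecMulVec_apply, Pi.add_apply, Pi.smul_apply, smul_eq_mul]
    linear_combination (-(u i * v j)) * hab + u i * u j * hd

/-- A bilinear form invariant under `M` pairs generalized eigenvectors trivially unless their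
eigenvalues are reciprocal. -/
theorem dotProduct_mulVec_eq_zero_of_genEigenvectors {M Y : Matrix n n K}
    (hY : Mᵀ * Y * M = Y) {a b : K} (hab : a * b ≠ 1) (k l : ℕ) (x y : n → K)
    (hx : ((M.mulVecLin - a • 1) ^ k) x = 0) (hy : ((M.mulVecLin - b • 1) ^ l) y = 0) :
    x ⬝ᵥ Y *ᵥ y = 0 := by
  induction k generalizing x l y with
  | zero => simp_all
  | succ k ihk =>
    induction l generalizing y with
    | zero => simp_all
    | succ l ihl =>
      have hx' := hx
      have hy' := hy
      rw [pow_succ, Module.End.mul_apply] at hx' hy'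
      set x' := (M.mulVecLin - a • 1 : Module.End K (n → K)) x with hxd
      set y' := (M.mulVecLin - b • 1 : Module.End K (n → K)) y with hyd
      have hMx : M *ᵥ x = a • x + x' := by simp [hxd]
      have hMy : M *ᵥ y = b • y + y' := by simp [hyd]
      have h₁ : x' ⬝ᵥ Y *ᵥ y = 0 := ihk _ _ _ hx' hy
      have h₂ : x' ⬝ᵥ Y *ᵥ y' = 0 := ihk _ _ _ hx' hy'
      have h₃ : x ⬝ᵥ Y *ᵥ y' = 0 := ihl _ hy'
      have key : x ⬝ᵥ Y *ᵥ y = (M *ᵥ x) ⬝ᵥ Y *ᵥ (M *ᵥ y) := by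
        conv_lhs => rw [← hY]
        rw [← mulVec_mulVec, ← mulVec_mulVec, dotProduct_mulVec, vecMul_transpose]
      rw [hMx, hMy] at key
      simp only [mulVec_add, mulVec_smul, add_dotProduct, dotProduct_add, smul_dotProduct,
        dotProduct_smul, smul_eq_mul, h₁, h₂, h₃] at key
      have : (1 - a * b) * (x ⬝ᵥ Y *ᵥ y) = 0 := by linear_combination key
      exact (mul_eq_zero.mp this).resolve_left (sub_ne_zero.mpr hab.symm)

theorem exists_vecMul_eq_smul_of_mem_spectrum [DecidableEq n] {M : Matrix n n K} {a : K}
    (ha : a ∈ spectrum K M) : ∃ u : n → K, u ≠ 0 ∧ u ᵥ* M = a • u := by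
  rw [mem_spectrum_iff_isRoot_charpoly, ← charpoly_transpose, ← charpoly_mulVecLin,
    ← Module.End.hasEigenvalue_iff_isRoot_charpoly] at ha
  obtain ⟨u, hu⟩ := ha.exists_hasEigenvector
  refine ⟨u, hu.2, ?_⟩
  simpa [mulVec_transpose] using hu.apply_eq_smul

theorem mem_spectrum_of_maxGenEigenvector [DecidableEq n] {M : Matrix n n K} {a : K} {x : n → K}
    (hx : x ∈ Module.End.maxGenEigenspace M.mulVecLin a) (hx0 : x ≠ 0) : a ∈ spectrum K M := by
  rw [mem_spectrum_iff_isRoot_charpoly, ← charpoly_mulVecLin,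
    ← rootMultiplicity_pos (LinearMap.charpoly_monic _).ne_zero,
    ← LinearMap.finrank_maxGenEigenspace_eq, Module.finrank_pos_iff_exists_ne_zero]
  exact ⟨⟨x, hx⟩, fun h => hx0 (congrArg Subtype.val h)⟩

/-- The equation `Y = YᵀM` over an algebraically closed field of characteristic not two has only
the trivial solution iff no two eigenvalues of `M` are reciprocal, except for a simple `-1`. -/
theorem eq_transpose_mul_trivial_iff [DecidableEq n] [IsAlgClosed K] (h2 : (2 : K) ≠ 0)
    (M : Matrix n n K) :
    (∀ Y : Matrix n n K, Y = Yᵀ * M → Y = 0) ↔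
      ((∀ a ∈ spectrum K M, a ≠ -1 → ∀ b ∈ spectrum K M, a * b ≠ 1) ∧
        ((-1 : K) ∈ spectrum K M → M.charpoly.rootMultiplicity (-1) = 1)) := by
  constructor
  · intro h
    have hno : ¬ ∃ Y : Matrix n n K, Y ≠ 0 ∧ Y = Yᵀ * M := fun ⟨Y, h0, hY⟩ => h0 (h Y hY)
    refine ⟨fun a ha ha1 b hb hab => ?_, fun h1 => ?_⟩
    · obtain ⟨u, hu0, hu⟩ := exists_vecMul_eq_smul_of_mem_spectrum ha
      obtain ⟨v, hv0, hv⟩ := exists_vecMul_eq_smul_of_mem_spectrum hb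
      by_cases hne : a = b
      · subst hne
        have ha' : a = 1 := (mul_self_eq_one_iff.mp hab).resolve_right ha1
        subst ha'
        refine hno ⟨vecMulVec u u, ?_, ?_⟩
        · intro h0
          obtain ⟨i, hi⟩ := Function.ne_iff.mp hu0
          exact mul_ne_zero hi hi (congrFun (congrFun h0 i) i)
        · rw [transpose_vecMulVec, vecMulVec_mul, hu, one_smul]
      · refine hno (exists_ne_zero_eq_transpose_mul_of_pair (c := 0) (d := 0) ?_ hu
          (by simpa using hv) hab (by simp))
        rw [LinearIndependent.pair_iff]
        intro s t hst
        have h' : s • (a • u) + t • (b • v) = 0 := by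
          have := congrArg (· ᵥ* M) hst
          simpa [add_vecMul, smul_vecMul, hu, hv] using this
        have hs : (s * (a - b)) • u = 0 := by
          have : (s * (a - b)) • u = (s • (a • u) + t • (b • v)) - b • (s • u + t • v) := by
            module
          rw [this, h', hst, smul_zero, sub_zero]
        have hs0 : s = 0 := by
          have := (smul_eq_zero.mp hs).resolve_right hu0
          exact (mul_eq_zero.mp this).resolve_right (sub_ne_zero.mpr hne)
        subst hs0
        rw [zero_smul, zero_add] at hst
        exact ⟨rfl, (smul_eq_zero.mp hst).resolve_right hv0⟩
    · have hpos : 0 < M.charpoly.rootMultiplicity (-1) :=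
        (rootMultiplicity_pos M.charpoly_monic.ne_zero).mpr
          (mem_spectrum_iff_isRoot_charpoly.mp h1)
      by_contra hne
      have hlt : 1 < Module.finrank K (Module.End.maxGenEigenspace Mᵀ.mulVecLin (-1)) := by
        rw [LinearMap.finrank_maxGenEigenspace_eq, charpoly_mulVecLin, charpoly_transpose]
        omega
      obtain ⟨u, v, c, huv, hu, hv⟩ :=
        Module.End.exists_pair_of_one_lt_finrank_maxGenEigenspace _ _ hlt
      rw [mulVecLin_apply, mulVec_transpose] at hu hv
      refine hno (exists_ne_zero_eq_transpose_mul_of_pair (d := -c / 2) huv hu hv (by ring) ?_)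
      field_simp
      ring
  · rintro ⟨h1, h2'⟩ Y hY
    have hYt : Yᵀ = Mᵀ * Y := by
      conv_lhs => rw [hY]
      rw [transpose_mul, transpose_transpose]
    have hinv : Mᵀ * Y * M = Y := by rw [← hYt, ← hY]
    have hpair : ∀ a b : K, ∀ x ∈ Module.End.maxGenEigenspace M.mulVecLin a,
        ∀ y ∈ Module.End.maxGenEigenspace M.mulVecLin b, x ⬝ᵥ Y *ᵥ y = 0 := by
      intro a b x hx y hy
      by_cases hx0 : x = 0
      · simp [hx0]
      by_cases hy0 : y = 0
      · simp [hy0]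
      have ha := mem_spectrum_of_maxGenEigenvector hx hx0
      have hb := mem_spectrum_of_maxGenEigenvector hy hy0
      by_cases hab : a * b = 1
      · have ha1 : a = -1 := by
          by_contra hne
          exact h1 a ha hne b hb hab
        subst ha1
        have hb1 : b = -1 := by linear_combination -hab
        subst hb1
        have hfin : Module.finrank K (Module.End.maxGenEigenspace M.mulVecLin (-1)) = 1 := by
          rw [LinearMap.finrank_maxGenEigenspace_eq, charpoly_mulVecLin, h2' ha]
        rw [mem_spectrum_iff_isRoot_charpoly, ← charpoly_mulVecLin,
          ← Module.End.hasEigenvalue_iff_isRoot_charpoly] at ha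
        obtain ⟨w, hw⟩ := ha.exists_hasEigenvector
        have hMw : M *ᵥ w = -w := by simpa using hw.apply_eq_smul
        have hwmem : w ∈ Module.End.maxGenEigenspace M.mulVecLin (-1) :=
          Module.End.mem_maxGenEigenspace _ _ _ |>.mpr ⟨1, by simp [hMw]⟩
        have hspan := (finrank_eq_one_iff_of_nonzero'
          (⟨w, hwmem⟩ : Module.End.maxGenEigenspace M.mulVecLin (-1))
          (fun h => hw.2 (congrArg Subtype.val h))).mp hfin
        obtain ⟨s, hs⟩ := hspan ⟨x, hx⟩
        obtain ⟨t, ht⟩ := hspan ⟨y, hy⟩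
        have hs' : s • w = x := congrArg Subtype.val hs
        have ht' : t • w = y := congrArg Subtype.val ht
        have hww : w ⬝ᵥ Y *ᵥ w = -(w ⬝ᵥ Y *ᵥ w) := by
          conv_lhs => rw [hY]
          rw [← mulVec_mulVec, hMw, mulVec_neg, dotProduct_neg, mulVec_transpose,
            dotProduct_comm, ← dotProduct_mulVec]
        have hzero : w ⬝ᵥ Y *ᵥ w = 0 := by
          have : 2 * (w ⬝ᵥ Y *ᵥ w) = 0 := by linear_combination hww
          exact (mul_eq_zero.mp this).resolve_left h2
        rw [← hs', ← ht', mulVec_smul, smul_dotProduct, dotProduct_smul, hzero, smul_zero,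
          smul_zero]
      · obtain ⟨k, hk⟩ := (Module.End.mem_maxGenEigenspace _ _ _).mp hx
        obtain ⟨l, hl⟩ := (Module.End.mem_maxGenEigenspace _ _ _).mp hy
        exact dotProduct_mulVec_eq_zero_of_genEigenvectors hinv hab k l x y hk hl
    have htop := Module.End.iSup_maxGenEigenspace_eq_top (K := K) M.mulVecLin
    have hall : ∀ x y : n → K, x ⬝ᵥ Y *ᵥ y = 0 := by
      intro x y
      refine Submodule.iSup_induction _ (motive := fun x => x ⬝ᵥ Y *ᵥ y = 0)
        (htop.symm ▸ Submodule.mem_top : x ∈ _) (fun a x hx => ?_) (by simp)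
        (fun x₁ x₂ h₁ h₂ => by rw [add_dotProduct, h₁, h₂, add_zero])
      exact Submodule.iSup_induction _ (motive := fun y => x ⬝ᵥ Y *ᵥ y = 0)
        (htop.symm ▸ Submodule.mem_top : y ∈ _) (fun b y hy => hpair a b x hx y hy) (by simp)
        (fun y₁ y₂ h₁ h₂ => by rw [mulVec_add, dotProduct_add, h₁, h₂, add_zero])
    ext i j
    simpa using hall (Pi.single i 1) (Pi.single j 1)

end Matrix

/-- **Unique solvability of the ⊤-Stein equation `X = AXᵀB + C`.**
The equation has a unique solution for every right-hand side `C` iff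
(i) for every eigenvalue `λ` of `AᵀB` with `λ ≠ -1`, the number `1/λ` is not an
eigenvalue of `AᵀB` (expressed product-wise as `λ·μ ≠ 1` for all eigenvalues `μ`,
which in particular rules out `1` being an eigenvalue), and
(ii) if `-1` is an eigenvalue of `AᵀB`, it is simple (algebraic multiplicity one). -/
theorem tStein_uniquely_solvable_iff (m n : ℕ) (A B : Matrix (Fin m) (Fin n) ℂ) :
    (∀ C : Matrix (Fin m) (Fin n) ℂ, ∃! X : Matrix (Fin m) (Fin n) ℂ,
        X = A * Xᵀ * B + C) ↔
      ((∀ lam ∈ spectrum ℂ (Aᵀ * B), lam ≠ -1 →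
          ∀ mu ∈ spectrum ℂ (Aᵀ * B), lam * mu ≠ 1) ∧
        ((-1 : ℂ) ∈ spectrum ℂ (Aᵀ * B) →
          ((Aᵀ * B).charpoly).rootMultiplicity (-1) = 1)) := by
  rw [tStein_existsUnique_iff, tStein_homogeneous_trivial_iff,
    eq_transpose_mul_trivial_iff two_ne_zero]
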